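/- arXiv:2006.03139 — 6 statements merged into one kernel-verified Lean document; each statement's English description precedes it below -/
import Mathlib

section
/- Let n ≥ 3 and let ρ and σ be density matrices on ℂ^n. Suppose that for every context (P_1,…,P_k) on ℂ^n the contextual entropies of ρ and σ coincide, i.e. Sh(Tr(ρP_1),…,Tr(ρP_k)) = Sh(Tr(σP_1),…,Tr(σP_k)). Then ρ = σ. (In other words, for n ≥ 3 the contextual entropy map is injective on density matrices, so a quantum state can be reconstructed from its contextual entropy.) -/
/-!
Coarse-graining to a two-element context `(P, 1 - P)` turns the hypothesis into an equality of binary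
entropies, so that for every projection `P` the weight `Tr(σP)` is either `Tr(ρP)` or `1 - Tr(ρP)`
(`trace_eq_or_flip`).

Suppose that the weight is flipped at a unit vector `v`, i.e. `⟨v, σv⟩ = 1 - ⟨v, ρv⟩ ≠ ⟨v, ρv⟩`, and
put `a = ⟨v, ρv⟩`. Comparing the alternatives for `v`, for a unit vector `u ⊥ v` and for the rank-two
projection onto their span leaves only `⟨u, ρu⟩ ∈ {0, 1 - a}` (`quad_of_flip`). If `a ≠ 1`, then since
`Tr ρ = 1` some `u` in an orthonormal basis through `v` has the value `1 - a`. As `n ≥ 3` there is a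
second basis vector `w ⊥ v`, whose value is then `0` or `1 - a`, and a quadratic form cannot
take only these two values on the unit circle of the span of `u, w` without being constant there
(`quad_eq_of_two_values`); so `w` also has the value `1 - a`, and so has every other basis vector, which makes the trace too large.
Hence `a = 1` (`quad_eq_one_of_flip`). Exchanging `ρ` and `σ` gives `1 - a = 1` as well, a
contradiction. So nothing is flipped, the quadratic forms of `ρ` and `σ` coincide, and `ρ = σ`
by polarization.
-/

open Matrix ComplexOrder

/-- Shannon entropy of a (finitely indexed) probability vector, with the
convention `0 * log 0 = 0` (automatic since `Real.log 0 = 0`). -/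
noncomputable def Sh {ι : Type*} [Fintype ι] (p : ι → ℝ) : ℝ :=
  -∑ i, p i * Real.log (p i)

/-- A density matrix: positive semidefinite with trace 1. -/
def IsDensityMatrix {ι : Type*} [Fintype ι] [DecidableEq ι]
    (ρ : Matrix ι ι ℂ) : Prop :=
  ρ.PosSemidef ∧ ρ.trace = 1

/-- A context: a finite family of nonzero pairwise orthogonal projections
summing to the identity. -/
def IsContext {ι N : Type*} [Fintype ι] [Fintype N] [DecidableEq N]
    (P : ι → Matrix N N ℂ) : Prop :=
  (∀ i, P i ≠ 0) ∧ (∀ i, (P i)ᴴ = P i) ∧ (∀ i, P i * P i = P i) ∧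
    (∀ i j, i ≠ j → P i * P j = 0) ∧ (∑ i, P i = 1)

lemma eq_or_eq_one_sub_of_binEntropy_eq {p q : ℝ} (hp0 : 0 ≤ p) (hp1 : p ≤ 1) (hq0 : 0 ≤ q)
    (hq1 : q ≤ 1) (h : Real.binEntropy p = Real.binEntropy q) : q = p ∨ q = 1 - p := by
  have inj := Real.binEntropy_strictMonoOn.injOn
  rcases le_total p 2⁻¹ with hp | hp <;> rcases le_total q 2⁻¹ with hq | hq
  · exact Or.inl (inj ⟨hp0, hp⟩ ⟨hq0, hq⟩ h).symm
  · right
    have := inj (x₁ := p) (x₂ := 1 - q) ⟨hp0, hp⟩ ⟨by linarith, by linarith⟩ (by simpa using h)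
    linarith
  · right
    have := inj (x₁ := 1 - p) (x₂ := q) ⟨by linarith, by linarith⟩ ⟨hq0, hq⟩ (by simpa using h)
    linarith
  · left
    have := inj (x₁ := 1 - p) (x₂ := 1 - q) ⟨by linarith, by linarith⟩
      ⟨by linarith, by linarith⟩ (by simpa using h)
    linarith

section

variable {n : ℕ}

lemma IsDensityMatrix.trace_mul_nonneg {ρ P : Matrix (Fin n) (Fin n) ℂ} (hρ : IsDensityMatrix ρ)
    (hP : Pᴴ = P) (hPP : P * P = P) : 0 ≤ ((ρ * P).trace).re := by
  have h1 := (hρ.1.mul_mul_conjTranspose_same P).trace_nonneg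
  rw [hP, Matrix.trace_mul_comm, ← Matrix.mul_assoc, hPP, Matrix.trace_mul_comm] at h1
  exact (Complex.le_def.1 h1).1

lemma IsDensityMatrix.trace_mul_compl {ρ : Matrix (Fin n) (Fin n) ℂ} (hρ : IsDensityMatrix ρ)
    (P : Matrix (Fin n) (Fin n) ℂ) : ((ρ * (1 - P)).trace).re = 1 - ((ρ * P).trace).re := by
  rw [Matrix.mul_sub, Matrix.mul_one, Matrix.trace_sub, hρ.2]
  simp

/-- The states `ρ` and `σ` give every projection either the same or complementary weights. -/
def SameOrFlipped (ρ σ : Matrix (Fin n) (Fin n) ℂ) : Prop :=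
  ∀ P : Matrix (Fin n) (Fin n) ℂ, Pᴴ = P → P * P = P →
    ((σ * P).trace).re = ((ρ * P).trace).re ∨ ((σ * P).trace).re = 1 - ((ρ * P).trace).re

lemma SameOrFlipped.symm {ρ σ : Matrix (Fin n) (Fin n) ℂ} (H : SameOrFlipped ρ σ) :
    SameOrFlipped σ ρ := fun P h1 h2 =>
  (H P h1 h2).imp Eq.symm fun h => by linarith

/-- Equality of the entropies at the contexts `(P, 1 - P)` gives the dichotomy; the degenerate
projections `0` and `1` satisfy it trivially. -/
lemma trace_eq_or_flip {ρ σ : Matrix (Fin n) (Fin n) ℂ}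
    (hρ : IsDensityMatrix ρ) (hσ : IsDensityMatrix σ)
    (h : ∀ (k : ℕ) (P : Fin k → Matrix (Fin n) (Fin n) ℂ), IsContext P →
      Sh (fun i => ((ρ * P i).trace).re) = Sh (fun i => ((σ * P i).trace).re)) :
    SameOrFlipped ρ σ := by
  intro P hP hPP
  by_cases h0 : P = 0
  · simp [h0]
  by_cases h1 : P = 1
  · left
    simp [h1, hρ.2, hσ.2]
  have hQ : (1 - P)ᴴ = 1 - P := by simp [hP]
  have hQQ : (1 - P) * (1 - P) = 1 - P := by
    simp [mul_sub, sub_mul, hPP]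
  have key := h 2 ![P, 1 - P] (by
    refine ⟨?_, ?_, ?_, ?_, ?_⟩
    · intro i
      fin_cases i
      · exact h0
      · exact sub_ne_zero.2 (Ne.symm h1)
    · intro i
      fin_cases i
      · exact hP
      · exact hQ
    · intro i
      fin_cases i
      · exact hPP
      · exact hQQ
    · intro i j hij
      fin_cases i <;> fin_cases j <;> simp [mul_sub, sub_mul, hPP] at hij ⊢
    · simp)
  have a0 := hρ.trace_mul_nonneg hP hPP
  have a1 := hρ.trace_mul_nonneg hQ hQQ
  have b0 := hσ.trace_mul_nonneg hP hPP
  have b1 := hσ.trace_mul_nonneg hQ hQQ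
  simp only [Sh, Fin.sum_univ_two, Matrix.cons_val_zero, Matrix.cons_val_one] at key
  rw [hρ.trace_mul_compl] at key a1
  rw [hσ.trace_mul_compl] at key b1
  refine eq_or_eq_one_sub_of_binEntropy_eq a0 (by linarith) b0 (by linarith) ?_
  simp only [Real.binEntropy_eq_negMulLog_add_negMulLog_one_sub, Real.negMulLog]
  linarith

/-- The real quadratic form `u ↦ Re ⟨u, ρ u⟩` of a matrix. -/
noncomputable def quad (ρ : Matrix (Fin n) (Fin n) ℂ) (u : EuclideanSpace ℂ (Fin n)) : ℝ :=
  (inner ℂ u (Matrix.toEuclideanLin ρ u)).re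

/-- The matrix `u u*`; it is the projection onto the line of `u` when `u` is a unit vector. -/
def lineProj (u : EuclideanSpace ℂ (Fin n)) : Matrix (Fin n) (Fin n) ℂ :=
  vecMulVec u.ofLp (star u.ofLp)

lemma lineProj_conjTranspose (u : EuclideanSpace ℂ (Fin n)) : (lineProj u)ᴴ = lineProj u := by
  simp [lineProj, conjTranspose_vecMulVec]

lemma lineProj_mul (u v : EuclideanSpace ℂ (Fin n)) :
    lineProj u * lineProj v = (inner ℂ u v : ℂ) • vecMulVec u.ofLp (star v.ofLp) := by
  rw [lineProj, lineProj, vecMulVec_mul_vecMulVec, vecMulVec_smul,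
    EuclideanSpace.inner_eq_star_dotProduct, dotProduct_comm]

lemma lineProj_mul_self {u : EuclideanSpace ℂ (Fin n)} (hu : ‖u‖ = 1) :
    lineProj u * lineProj u = lineProj u := by
  rw [lineProj_mul, inner_self_eq_norm_sq_to_K, hu]
  simp [lineProj]

lemma trace_mul_lineProj (ρ : Matrix (Fin n) (Fin n) ℂ) (u : EuclideanSpace ℂ (Fin n)) :
    ((ρ * lineProj u).trace).re = quad ρ u := by
  rw [lineProj, mul_vecMulVec, trace_vecMulVec]
  rfl

lemma SameOrFlipped.quad {ρ σ : Matrix (Fin n) (Fin n) ℂ} (H : SameOrFlipped ρ σ)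
    {u : EuclideanSpace ℂ (Fin n)} (hu : ‖u‖ = 1) :
    quad σ u = quad ρ u ∨ quad σ u = 1 - quad ρ u := by
  simpa only [trace_mul_lineProj] using H _ (lineProj_conjTranspose u) (lineProj_mul_self hu)

lemma SameOrFlipped.quad_add {ρ σ : Matrix (Fin n) (Fin n) ℂ} (H : SameOrFlipped ρ σ)
    {u v : EuclideanSpace ℂ (Fin n)} (hu : ‖u‖ = 1) (hv : ‖v‖ = 1) (huv : inner ℂ u v = 0) :
    _root_.quad σ u + _root_.quad σ v = _root_.quad ρ u + _root_.quad ρ v ∨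
      _root_.quad σ u + _root_.quad σ v = 1 - (_root_.quad ρ u + _root_.quad ρ v) := by
  have h1 : (lineProj u + lineProj v)ᴴ = lineProj u + lineProj v := by
    rw [conjTranspose_add, lineProj_conjTranspose, lineProj_conjTranspose]
  have h2 : (lineProj u + lineProj v) * (lineProj u + lineProj v) = lineProj u + lineProj v := by
    have huv' : inner ℂ v u = 0 := inner_eq_zero_symm.1 huv
    rw [add_mul, mul_add, mul_add, lineProj_mul_self hu, lineProj_mul_self hv, lineProj_mul u v,
      lineProj_mul v u, huv, huv']
    simp
  simpa only [mul_add, Matrix.trace_add, Complex.add_re, trace_mul_lineProj] using H _ h1 h2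

/-- If the weight of `v` is flipped, the form of `ρ` takes only two values on the unit vectors
orthogonal to `v`. -/
lemma quad_of_flip {ρ σ : Matrix (Fin n) (Fin n) ℂ} (H : SameOrFlipped ρ σ)
    {u v : EuclideanSpace ℂ (Fin n)} (hv : ‖v‖ = 1) (hne : quad σ v ≠ quad ρ v)
    (hu : ‖u‖ = 1) (huv : inner ℂ u v = 0) : quad ρ u = 0 ∨ quad ρ u = 1 - quad ρ v := by
  have h1 := (H.quad hv).resolve_left hne
  rcases H.quad hu with h2 | h2 <;> rcases H.quad_add hu hv huv with h3 | h3
  · exact absurd (by linarith) hne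
  · left
    linarith
  · right
    linarith
  · exfalso
    linarith

lemma quad_comb (ρ : Matrix (Fin n) (Fin n) ℂ) (u w : EuclideanSpace ℂ (Fin n)) (s t : ℝ) :
    quad ρ ((s : ℂ) • u + (t : ℂ) • w) = s ^ 2 * quad ρ u + t ^ 2 * quad ρ w +
      s * t * (inner ℂ u (Matrix.toEuclideanLin ρ w) +
        inner ℂ w (Matrix.toEuclideanLin ρ u)).re := by
  simp only [quad, map_add, map_smul, inner_add_left, inner_add_right, inner_smul_left,
    inner_smul_right, Complex.conj_ofReal, Complex.add_re, Complex.re_ofReal_mul]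
  ring

/-- On the orthogonal complement of `v`, a form taking only the values `0` and `d` on unit vectors
cannot take both of them on an orthonormal pair. -/
lemma quad_eq_of_two_values {ρ : Matrix (Fin n) (Fin n) ℂ} {u v w : EuclideanSpace ℂ (Fin n)}
    {d : ℝ} (hd : d ≠ 0)
    (hval : ∀ x : EuclideanSpace ℂ (Fin n), ‖x‖ = 1 → inner ℂ x v = 0 →
      quad ρ x = 0 ∨ quad ρ x = d)
    (hu : ‖u‖ = 1) (hw : ‖w‖ = 1) (huw : inner ℂ u w = 0)
    (huv : inner ℂ u v = 0) (hwv : inner ℂ w v = 0) (hud : quad ρ u = d) : quad ρ w = d := by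
  refine (hval w hw hwv).resolve_left fun hw0 => ?_
  have comb : ∀ s t : ℝ, s ^ 2 + t ^ 2 = 1 →
      quad ρ ((s : ℂ) • u + (t : ℂ) • w) = 0 ∨ quad ρ ((s : ℂ) • u + (t : ℂ) • w) = d := by
    intro s t hst
    apply hval
    · have : ‖(s : ℂ) • u + (t : ℂ) • w‖ * ‖(s : ℂ) • u + (t : ℂ) • w‖ = 1 := by
        rw [norm_add_sq_eq_norm_sq_add_norm_sq_of_inner_eq_zero (𝕜 := ℂ) _ _
          (by rw [inner_smul_left, inner_smul_right, huw, mul_zero, mul_zero]), norm_smul, norm_smul, hu, hw]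
        simp [← sq, hst]
      nlinarith [norm_nonneg ((s : ℂ) • u + (t : ℂ) • w)]
    · rw [inner_add_left, inner_smul_left, inner_smul_left, huv, hwv, mul_zero, mul_zero, add_zero]
  -- The two Pythagorean combinations force incompatible values of the cross term.
  have h1 := comb (3 / 5) (4 / 5) (by norm_num)
  have h2 := comb (4 / 5) (3 / 5) (by norm_num)
  rw [quad_comb, hud, hw0] at h1 h2
  generalize (inner ℂ u (Matrix.toEuclideanLin ρ w) +
        inner ℂ w (Matrix.toEuclideanLin ρ u)).re = c at h1 h2
  apply hd
  rcases h1 with h1 | h1 <;> rcases h2 with h2 | h2 <;> linarith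

lemma sum_quad (ρ : Matrix (Fin n) (Fin n) ℂ) (hρ : IsDensityMatrix ρ)
    (b : OrthonormalBasis (Fin n) ℂ (EuclideanSpace ℂ (Fin n))) : ∑ i, quad ρ (b i) = 1 := by
  have h1 := LinearMap.trace_eq_sum_inner (Matrix.toEuclideanLin ρ) b
  have h2 : LinearMap.trace ℂ _ (Matrix.toEuclideanLin ρ) = ρ.trace := by
    rw [Matrix.toEuclideanLin_eq_toLin_orthonormal, Matrix.trace_toLin_eq]
  rw [h2, hρ.2] at h1
  simpa [quad] using (congrArg Complex.re h1).symm

lemma quad_eq_one_of_flip (hn : 3 ≤ n) {ρ σ : Matrix (Fin n) (Fin n) ℂ} (hρ : IsDensityMatrix ρ)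
    (H : SameOrFlipped ρ σ) {v : EuclideanSpace ℂ (Fin n)} (hv : ‖v‖ = 1)
    (hne : quad σ v ≠ quad ρ v) : quad ρ v = 1 := by
  by_contra ha
  have hd : 1 - quad ρ v ≠ 0 := fun h => ha (by linarith)
  let z : Fin n := ⟨0, by omega⟩
  obtain ⟨b, hb⟩ := Orthonormal.exists_orthonormalBasis_extension_of_card_eq (𝕜 := ℂ)
    (E := EuclideanSpace ℂ (Fin n)) (ι := Fin n) (by simp) (v := fun _ => v) (s := {z})
    (by
      constructor
      · intro i
        exact hv
      · intro i j hij
        exact absurd (Subsingleton.elim i j) hij)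
  have hbz : b z = v := hb z rfl
  have hval : ∀ x : EuclideanSpace ℂ (Fin n), ‖x‖ = 1 → inner ℂ x v = 0 →
      quad ρ x = 0 ∨ quad ρ x = 1 - quad ρ v := fun x hx hxv => quad_of_flip H hv hne hx hxv
  have orth : ∀ i, i ≠ z → inner ℂ (b i) v = 0 := fun i hi => by
    rw [← hbz]
    exact b.orthonormal.2 hi
  have hsum := sum_quad ρ hρ b
  rw [← Finset.add_sum_erase _ _ (Finset.mem_univ z), hbz] at hsum
  by_cases hall : ∀ i, i ≠ z → quad ρ (b i) = 0
  · rw [Finset.sum_eq_zero fun i hi => hall i (Finset.ne_of_mem_erase hi)] at hsum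
    exact ha (by linarith)
  push Not at hall
  obtain ⟨i, hi, hi0⟩ := hall
  have hid := (hval _ (b.orthonormal.1 i) (orth i hi)).resolve_left hi0
  have hconst : ∀ j ∈ Finset.univ.erase z, quad ρ (b j) = 1 - quad ρ v := by
    intro j hj
    have hjz := Finset.ne_of_mem_erase hj
    by_cases hij : i = j
    · exact hij ▸ hid
    · exact quad_eq_of_two_values hd hval (b.orthonormal.1 i) (b.orthonormal.1 j)
        (b.orthonormal.2 hij) (orth i hi) (orth j hjz) hid
  rw [Finset.sum_congr rfl hconst, Finset.sum_const, Finset.card_erase_of_mem (Finset.mem_univ z),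
    Finset.card_univ, Fintype.card_fin, nsmul_eq_mul, Nat.cast_sub (by omega)] at hsum
  -- The trace condition now reads `a + (n - 1) (1 - a) = 1`, which is impossible for `n ≥ 3`.
  have hn' : (3 : ℝ) ≤ n := by exact_mod_cast hn
  have : ((n : ℝ) - 2) * (1 - quad ρ v) = 0 := by
    push_cast at hsum
    linarith
  rcases mul_eq_zero.1 this with h | h
  · linarith
  · exact hd h

lemma eq_of_quad_eq {ρ σ : Matrix (Fin n) (Fin n) ℂ} (hρ : ρ.IsHermitian) (hσ : σ.IsHermitian)
    (h : ∀ u : EuclideanSpace ℂ (Fin n), ‖u‖ = 1 → quad ρ u = quad σ u) : ρ = σ := by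
  have hall : ∀ u, quad ρ u = quad σ u := by
    intro u
    by_cases hu : u = 0
    · simp [hu, quad]
    have hu' : ‖u‖ ≠ 0 := norm_ne_zero_iff.2 hu
    have h1 := h (((‖u‖⁻¹ : ℝ) : ℂ) • u) (by simp [norm_smul, hu'])
    have h2 := quad_comb ρ u 0 ‖u‖⁻¹ 0
    have h3 := quad_comb σ u 0 ‖u‖⁻¹ 0
    simp only [smul_zero, add_zero] at h2 h3
    rw [h2, h3] at h1
    simpa [quad, hu'] using h1
  have hsym : (Matrix.toEuclideanLin (ρ - σ)).IsSymmetric :=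
    Matrix.isSymmetric_toEuclideanLin_iff.2 (hρ.sub hσ)
  have hz : Matrix.toEuclideanLin (ρ - σ) = 0 := by
    refine hsym.inner_map_self_eq_zero.1 fun x => ?_
    rw [← hsym.coe_re_inner_apply_self, hsym x x]
    have := hall x
    simp only [quad] at this
    simp [inner_sub_right, this]
  exact sub_eq_zero.1 ((LinearEquiv.map_eq_zero_iff _).1 hz)

end

/-- for `n ≥ 3`, a density matrix on `ℂ^n` is determined by its
contextual entropy, i.e. by the Shannon entropies of the probability
distributions it induces in all contexts. -/
theorem contextual_entropy_injective (n : ℕ) (hn : 3 ≤ n)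
    (ρ σ : Matrix (Fin n) (Fin n) ℂ)
    (hρ : IsDensityMatrix ρ) (hσ : IsDensityMatrix σ)
    (h : ∀ (k : ℕ) (P : Fin k → Matrix (Fin n) (Fin n) ℂ), IsContext P →
      Sh (fun i => ((ρ * P i).trace).re) = Sh (fun i => ((σ * P i).trace).re)) :
    ρ = σ := by
  have H := trace_eq_or_flip hρ hσ h
  refine eq_of_quad_eq hρ.1.isHermitian hσ.1.isHermitian fun u hu => ?_
  by_contra hne
  have h1 := quad_eq_one_of_flip hn hρ H hu (Ne.symm hne)
  have h2 := quad_eq_one_of_flip hn hσ H.symm hu hne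
  exact hne (h1.trans h2.symm)
end

section
/- For every density matrix ρ on ℂ^n, the von Neumann entropy of ρ equals the minimum over all unitary matrices U ∈ U(n) of the Shannon entropy of the diagonal of UρU*: VN(ρ) = min_{U ∈ U(n)} Sh((UρU*)_{11},…,(UρU*)_{nn}), and this minimum is attained (e.g. at any unitary U for which UρU* is diagonal). -/
/-!
Let `λ` be the eigenvalues of `ρ` and `V` a unitary with `ρ = V diag(λ) V*`. For a unitary `U`, set
`W = U V`; then the diagonal of `U ρ U*` is `i ↦ ∑ j, |W i j|² λ j`. As the matrix `|W i j|²` is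
doubly stochastic (`sum_normSq_row`, `sum_normSq_col`), Jensen's inequality for the concave function
`x ↦ -x log x`, summed over `i`, gives the lower bound (`sh_eigenvalues_le`).

If `U ρ U*` is diagonal, its diagonal entries are the roots of its characteristic polynomial, which
is that of `ρ`; so they are the eigenvalues up to order and the two entropies agree
(`sh_diag_eq_of_isDiag`). The minimum is attained since `V* ρ V` is diagonal.
-/

open Matrix ComplexOrder

theorem Sh_eq_sum_negMulLog {ι : Type*} [Fintype ι] (p : ι → ℝ) :
    Sh p = ∑ i, Real.negMulLog (p i) := by
  simp [Sh, Real.negMulLog, Finset.sum_neg_distrib]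

theorem sum_normSq_row {n : ℕ} (W : Matrix.unitaryGroup (Fin n) ℂ) (i : Fin n) :
    ∑ j, Complex.normSq ((W : Matrix (Fin n) (Fin n) ℂ) i j) = 1 := by
  have h := congrFun (congrFun (Unitary.coe_mul_star_self W) i) i
  simp only [Unitary.coe_star, Matrix.mul_apply, Matrix.star_apply, Matrix.one_apply_eq, RCLike.star_def,
    Complex.mul_conj] at h
  exact_mod_cast h

theorem sum_normSq_col {n : ℕ} (W : Matrix.unitaryGroup (Fin n) ℂ) (j : Fin n) :
    ∑ i, Complex.normSq ((W : Matrix (Fin n) (Fin n) ℂ) i j) = 1 := by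
  have h := congrFun (congrFun (Unitary.coe_star_mul_self W) j) j
  simp only [Matrix.mul_apply, Matrix.star_apply, Matrix.one_apply_eq, RCLike.star_def,
    mul_comm _ ((W : Matrix (Fin n) (Fin n) ℂ) _ _), Complex.mul_conj] at h
  exact_mod_cast h

theorem re_diag_conj_eq {n : ℕ} {ρ : Matrix (Fin n) (Fin n) ℂ} (hρ : ρ.IsHermitian)
    (U : Matrix.unitaryGroup (Fin n) ℂ) (i : Fin n) :
    (((U : Matrix (Fin n) (Fin n) ℂ) * ρ * (U : Matrix (Fin n) (Fin n) ℂ)ᴴ) i i).re =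
      ∑ j, Complex.normSq (((U * hρ.eigenvectorUnitary : Matrix.unitaryGroup (Fin n) ℂ) :
        Matrix (Fin n) (Fin n) ℂ) i j) * hρ.eigenvalues j := by
  have h : (U : Matrix (Fin n) (Fin n) ℂ) * ρ * (U : Matrix (Fin n) (Fin n) ℂ)ᴴ =
      ((U * hρ.eigenvectorUnitary : Matrix.unitaryGroup (Fin n) ℂ) : Matrix (Fin n) (Fin n) ℂ) *
        diagonal (RCLike.ofReal ∘ hρ.eigenvalues) *
      ((U * hρ.eigenvectorUnitary : Matrix.unitaryGroup (Fin n) ℂ) :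
        Matrix (Fin n) (Fin n) ℂ)ᴴ := by
    conv_lhs => rw [hρ.spectral_theorem, Unitary.conjStarAlgAut_apply]
    simp only [Submonoid.coe_mul, conjTranspose_mul, Matrix.mul_assoc, Matrix.star_eq_conjTranspose]
  rw [h, Matrix.mul_apply, Complex.re_sum]
  refine Finset.sum_congr rfl fun j _ => ?_
  rw [Matrix.mul_diagonal, conjTranspose_apply, RCLike.star_def, mul_right_comm, Complex.mul_conj]
  simp

theorem sh_eigenvalues_le {n : ℕ} {ρ : Matrix (Fin n) (Fin n) ℂ} (hρ : ρ.PosSemidef)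
    (U : Matrix.unitaryGroup (Fin n) ℂ) :
    Sh hρ.1.eigenvalues ≤ Sh (fun i =>
      (((U : Matrix (Fin n) (Fin n) ℂ) * ρ * (U : Matrix (Fin n) (Fin n) ℂ)ᴴ) i i).re) := by
  simp only [re_diag_conj_eq hρ.1, Sh_eq_sum_negMulLog]
  set W := U * hρ.1.eigenvectorUnitary
  calc ∑ j, Real.negMulLog (hρ.1.eigenvalues j)
      = ∑ j, ∑ i, Complex.normSq ((W : Matrix (Fin n) (Fin n) ℂ) i j) *
          Real.negMulLog (hρ.1.eigenvalues j) := by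
        simp only [← Finset.sum_mul, sum_normSq_col, one_mul]
    _ = ∑ i, ∑ j, Complex.normSq ((W : Matrix (Fin n) (Fin n) ℂ) i j) *
          Real.negMulLog (hρ.1.eigenvalues j) := Finset.sum_comm
    _ ≤ _ := Finset.sum_le_sum fun i _ =>
        Real.concaveOn_negMulLog.le_map_sum (fun j _ => Complex.normSq_nonneg _)
          (sum_normSq_row W i) fun j _ => hρ.eigenvalues_nonneg j

theorem sh_diag_eq_of_isDiag {n : ℕ} {ρ : Matrix (Fin n) (Fin n) ℂ} (hρ : ρ.IsHermitian)
    (U : Matrix.unitaryGroup (Fin n) ℂ)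
    (hU : ((U : Matrix (Fin n) (Fin n) ℂ) * ρ * (U : Matrix (Fin n) (Fin n) ℂ)ᴴ).IsDiag) :
    Sh (fun i =>
      (((U : Matrix (Fin n) (Fin n) ℂ) * ρ * (U : Matrix (Fin n) (Fin n) ℂ)ᴴ) i i).re) =
      Sh hρ.eigenvalues := by
  set D := (U : Matrix (Fin n) (Fin n) ℂ) * ρ * (U : Matrix (Fin n) (Fin n) ℂ)ᴴ with hD
  have hchar : D.charpoly = ρ.charpoly := by
    rw [hD, charpoly_mul_comm, ← Matrix.mul_assoc, ← Matrix.star_eq_conjTranspose,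
      Unitary.coe_star_mul_self, Matrix.one_mul]
  have hroots : D.charpoly.roots = Multiset.map D.diag Finset.univ.val := by
    conv_lhs => rw [← hU.diagonal_diag, charpoly_diagonal]
    rw [Polynomial.roots_prod]
    · simp only [Polynomial.roots_X_sub_C, Multiset.bind_singleton]
    · simp [Finset.prod_ne_zero_iff, Polynomial.X_sub_C_ne_zero]
  rw [hchar, hρ.roots_charpoly_eq_eigenvalues] at hroots
  -- An entropy is the sum of `negMulLog ∘ re` over the multiset of diagonal entries.
  have h := congrArg (fun s => (s.map fun z : ℂ => Real.negMulLog z.re).sum) hroots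
  simp only [Multiset.map_map] at h
  rw [Sh_eq_sum_negMulLog, Sh_eq_sum_negMulLog]
  exact h.symm

/-- the von Neumann entropy `VN ρ = Sh (eigenvalues of ρ)` is the
minimum over all unitaries `U` of the Shannon entropy of the diagonal of
`U ρ U*`, and the minimum is attained at any unitary for which `U ρ U*` is
diagonal. -/
theorem vonNeumann_eq_min_diag_shannon (n : ℕ)
    (ρ : Matrix (Fin n) (Fin n) ℂ) (hρ : IsDensityMatrix ρ) :
    IsLeast
      {x : ℝ | ∃ U : Matrix.unitaryGroup (Fin n) ℂ,
        x = Sh (fun i =>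
          (((U : Matrix (Fin n) (Fin n) ℂ) * ρ *
            (U : Matrix (Fin n) (Fin n) ℂ)ᴴ) i i).re)}
      (Sh hρ.1.1.eigenvalues) ∧
    ∀ U : Matrix.unitaryGroup (Fin n) ℂ,
      ((U : Matrix (Fin n) (Fin n) ℂ) * ρ *
        (U : Matrix (Fin n) (Fin n) ℂ)ᴴ).IsDiag →
      Sh (fun i =>
          (((U : Matrix (Fin n) (Fin n) ℂ) * ρ *
            (U : Matrix (Fin n) (Fin n) ℂ)ᴴ) i i).re)
        = Sh hρ.1.1.eigenvalues := by
  have hdiag := fun U => sh_diag_eq_of_isDiag hρ.1.1 U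
  refine ⟨⟨⟨star hρ.1.1.eigenvectorUnitary, (hdiag _ ?_).symm⟩, ?_⟩, hdiag⟩
  · have h := hρ.1.1.conjStarAlgAut_star_eigenvectorUnitary
    rw [Unitary.conjStarAlgAut_apply] at h
    rw [← Matrix.star_eq_conjTranspose, h]
    exact isDiag_diagonal _
  · rintro x ⟨U, rfl⟩
    exact sh_eigenvalues_le hρ.1 U
end

section
/- For every density matrix ρ on ℂ^n and every unitary matrix U ∈ U(n), the Shannon entropy of the diagonal of UρU* is at least the von Neumann entropy of ρ: Sh((UρU*)_{11},…,(UρU*)_{nn}) ≥ VN(ρ). -/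
/-!
Diagonalise `ρ = V D V*` and put `W = U V`, a unitary. The diagonal entries of `U ρ U* = W D W*`
are `∑ j, |W i j|² λ j`, that is, the image of the eigenvalue vector under the matrix `|W i j|²`,
which is doubly stochastic because `W` is unitary. Jensen's inequality for the concave function
`x ↦ -x log x` on `[0, ∞)` in each row, followed by summation over the rows, gives the claim.
-/

open Matrix ComplexOrder

/-- Jensen's inequality: applying a doubly stochastic matrix does not decrease entropy. -/
lemma Sh_le_of_doublyStochastic {ι : Type*} [Fintype ι] (P : ι → ι → ℝ) (x : ι → ℝ)
    (hP : ∀ i j, 0 ≤ P i j) (hrow : ∀ i, ∑ j, P i j = 1) (hcol : ∀ j, ∑ i, P i j = 1)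
    (hx : ∀ j, 0 ≤ x j) : Sh x ≤ Sh (fun i => ∑ j, P i j * x j) := by
  have hSh : ∀ y : ι → ℝ, Sh y = ∑ i, Real.negMulLog (y i) := fun y => by
    simp [Sh, Real.negMulLog]
  rw [hSh, hSh]
  calc ∑ j, Real.negMulLog (x j)
      = ∑ j, (∑ i, P i j) * Real.negMulLog (x j) := by simp [hcol]
    _ = ∑ i, ∑ j, P i j * Real.negMulLog (x j) := by
        simp_rw [Finset.sum_mul]
        exact Finset.sum_comm
    _ ≤ _ := Finset.sum_le_sum fun i _ => by
        simpa using Real.concaveOn_negMulLog.le_map_sum (t := Finset.univ)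
          (fun j _ => hP i j) (hrow i) (fun j _ => hx j)

lemma sum_normSq_row_s2 {ι : Type*} [Fintype ι] [DecidableEq ι] {W : Matrix ι ι ℂ}
    (hW : W * Wᴴ = 1) (i : ι) : ∑ j, Complex.normSq (W i j) = 1 := by
  have h := congrFun (congrFun hW i) i
  simp only [Matrix.mul_apply, Matrix.conjTranspose_apply, Matrix.one_apply_eq] at h
  simp only [RCLike.star_def, Complex.mul_conj] at h
  exact_mod_cast h

lemma re_diag_conj_diagonal {ι : Type*} [Fintype ι] [DecidableEq ι] (W : Matrix ι ι ℂ)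
    (x : ι → ℝ) (i : ι) :
    ((W * Matrix.diagonal (fun j => (x j : ℂ)) * Wᴴ) i i).re
      = ∑ j, Complex.normSq (W i j) * x j := by
  rw [Matrix.mul_apply, Complex.re_sum]
  refine Finset.sum_congr rfl fun j _ => ?_
  rw [Matrix.mul_diagonal, Matrix.conjTranspose_apply, RCLike.star_def, mul_right_comm,
    Complex.mul_conj, ← Complex.ofReal_mul, Complex.ofReal_re]

/-- for every density matrix `ρ` and unitary `U`, the Shannon
entropy of the diagonal of `U ρ U*` is at least the von Neumann entropy of
`ρ` (the Shannon entropy of its eigenvalues). -/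
theorem diag_shannon_ge_vonNeumann (n : ℕ)
    (ρ : Matrix (Fin n) (Fin n) ℂ) (hρ : IsDensityMatrix ρ)
    (U : Matrix.unitaryGroup (Fin n) ℂ) :
    Sh (fun i =>
        (((U : Matrix (Fin n) (Fin n) ℂ) * ρ *
          (U : Matrix (Fin n) (Fin n) ℂ)ᴴ) i i).re)
      ≥ Sh hρ.1.1.eigenvalues := by
  set V := hρ.1.1.eigenvectorUnitary with hV
  set W : Matrix (Fin n) (Fin n) ℂ := ((U * V : Matrix.unitaryGroup (Fin n) ℂ) :
    Matrix (Fin n) (Fin n) ℂ) with hW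
  have hWW : W * Wᴴ = 1 := Unitary.coe_mul_star_self (U * V)
  have hWW' : Wᴴ * W = 1 := Unitary.coe_star_mul_self (U * V)
  have hconj : (U : Matrix (Fin n) (Fin n) ℂ) * ρ * (U : Matrix (Fin n) (Fin n) ℂ)ᴴ
      = W * Matrix.diagonal (fun j => (hρ.1.1.eigenvalues j : ℂ)) * Wᴴ := by
    have h : ρ = (V : Matrix (Fin n) (Fin n) ℂ)
        * Matrix.diagonal (fun j => (hρ.1.1.eigenvalues j : ℂ))
        * (V : Matrix (Fin n) (Fin n) ℂ)ᴴ := by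
      have h0 := hρ.1.1.spectral_theorem
      rw [Unitary.conjStarAlgAut_apply] at h0
      exact h0
    have hWUV : W = (U : Matrix (Fin n) (Fin n) ℂ) * (V : Matrix (Fin n) (Fin n) ℂ) := rfl
    -- `ρ` also occurs inside its own eigenvalues, so only its occurrence as a factor is rewritten.
    refine (congrArg (fun A => (U : Matrix (Fin n) (Fin n) ℂ) * A
      * (U : Matrix (Fin n) (Fin n) ℂ)ᴴ) h).trans ?_
    rw [hWUV, Matrix.conjTranspose_mul]
    simp only [Matrix.mul_assoc]
  simp_rw [hconj, re_diag_conj_diagonal]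
  refine Sh_le_of_doublyStochastic _ _ (fun i j => Complex.normSq_nonneg _)
    (sum_normSq_row_s2 hWW) (fun j => ?_) hρ.1.eigenvalues_nonneg
  -- The columns of `W` are, up to conjugation, the rows of the unitary `Wᴴ`.
  have h := sum_normSq_row_s2 (W := Wᴴ) (by rwa [Matrix.conjTranspose_conjTranspose]) j
  simpa [Matrix.conjTranspose_apply] using h
end

section
/- For every density matrix ρ on ℂ^n there exists a unitary matrix U ∈ U(n) such that every diagonal entry of UρU* equals 1/n; consequently the contextual entropy of ρ at the corresponding rotated maximal context attains the maximal value ln n. -/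
/-!
The spectral theorem writes `ρ = V D V*` with `D` diagonal, carrying the eigenvalues of `ρ`. For the
unitary discrete Fourier matrix `F`, all of whose entries satisfy `|F i k|² = 1/n`, the diagonal
entries of `F D F*` are `∑ k, |F i k|² D k k = (tr D) / n = 1/n`. Hence `U = F V*` works, and the
entropy of the uniform vector is `-n · (1/n) · log (1/n) = log n`. Unitarity of `F` is
orthogonality of the additive characters of `ZMod n`.
-/

open Matrix ComplexOrder

/-- The normalised discrete Fourier matrix `(ζ ^ (i k)) / √n`, with `ζ = exp (2πi / n)`; the indices
are read in `ZMod n` so that the entries are values of the standard additive character. -/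
noncomputable def fourierMatrix (n : ℕ) [NeZero n] : Matrix (Fin n) (Fin n) ℂ :=
  Matrix.of fun i k =>
    ZMod.stdAddChar (ZMod.finEquiv n i * ZMod.finEquiv n k) * ((Real.sqrt n : ℝ) : ℂ)⁻¹

lemma inv_sqrt_mul_inv_sqrt (n : ℕ) :
    ((Real.sqrt n : ℝ) : ℂ)⁻¹ * ((Real.sqrt n : ℝ) : ℂ)⁻¹ = 1 / (n : ℂ) := by
  rw [← mul_inv, ← Complex.ofReal_mul, Real.mul_self_sqrt (Nat.cast_nonneg n)]
  simp

lemma fourierMatrix_mul_star (n : ℕ) [NeZero n] (i j k : Fin n) :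
    fourierMatrix n i k * star (fourierMatrix n j k) =
      ZMod.stdAddChar (ZMod.finEquiv n k * (ZMod.finEquiv n i - ZMod.finEquiv n j)) *
        (1 / (n : ℂ)) := by
  have h : ZMod.finEquiv n k * (ZMod.finEquiv n i - ZMod.finEquiv n j) =
      ZMod.finEquiv n i * ZMod.finEquiv n k + -(ZMod.finEquiv n j * ZMod.finEquiv n k) := by ring
  rw [h, AddChar.map_add_eq_mul, AddChar.map_neg_eq_conj, ← inv_sqrt_mul_inv_sqrt]
  simp only [fourierMatrix, Matrix.of_apply, star_mul', star_inv₀, Complex.star_def,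
    Complex.conj_ofReal]
  ring

lemma fourierMatrix_mem_unitaryGroup (n : ℕ) [NeZero n] :
    fourierMatrix n ∈ Matrix.unitaryGroup (Fin n) ℂ := by
  rw [Matrix.mem_unitaryGroup_iff]
  ext i j
  have hn : (n : ℂ) ≠ 0 := Nat.cast_ne_zero.mpr (NeZero.ne n)
  simp only [Matrix.mul_apply, Matrix.star_apply, fourierMatrix_mul_star]
  rw [← Finset.sum_mul, (ZMod.finEquiv n).bijective.sum_comp
    (fun x => ZMod.stdAddChar (x * (ZMod.finEquiv n i - ZMod.finEquiv n j))),
    AddChar.sum_mulShift _ (ZMod.isPrimitive_stdAddChar n)]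
  by_cases hij : i = j
  · subst hij
    simp [hn]
  · simp [hij, sub_eq_zero]

/-- Conjugating a diagonal matrix by the Fourier matrix averages its diagonal. -/
lemma fourierMatrix_conj_diagonal_apply (n : ℕ) [NeZero n] (d : Fin n → ℂ) (i : Fin n) :
    (fourierMatrix n * Matrix.diagonal d * (fourierMatrix n)ᴴ) i i = (∑ k, d k) / n := by
  rw [Matrix.mul_apply, Finset.sum_div]
  refine Finset.sum_congr rfl fun k _ => ?_
  have h := fourierMatrix_mul_star n i i k
  rw [sub_self, mul_zero, AddChar.map_zero_eq_one, one_mul] at h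
  rw [Matrix.mul_diagonal, Matrix.conjTranspose_apply, mul_right_comm, h]
  ring

lemma exists_unitary_diag_eq (n : ℕ) [NeZero n] (ρ : Matrix (Fin n) (Fin n) ℂ)
    (hρ : IsDensityMatrix ρ) :
    ∃ U : Matrix.unitaryGroup (Fin n) ℂ, ∀ i, ((U : Matrix (Fin n) (Fin n) ℂ) * ρ *
      (U : Matrix (Fin n) (Fin n) ℂ)ᴴ) i i = 1 / (n : ℂ) := by
  have hH := hρ.1.isHermitian
  refine ⟨⟨fourierMatrix n, fourierMatrix_mem_unitaryGroup n⟩ * star hH.eigenvectorUnitary,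
    fun i => ?_⟩
  have hD := hH.conjStarAlgAut_star_eigenvectorUnitary
  rw [Unitary.conjStarAlgAut_star_apply] at hD
  have htr : ∑ k, ((hH.eigenvalues k : ℝ) : ℂ) = 1 := by
    rw [← hρ.2, hH.trace_eq_sum_eigenvalues]
    rfl
  have hconj := fourierMatrix_conj_diagonal_apply n (RCLike.ofReal ∘ hH.eigenvalues) i
  rw [← hD] at hconj
  simp only [Submonoid.coe_mul, Unitary.coe_star, Matrix.conjTranspose_mul,
    Matrix.star_eq_conjTranspose, Matrix.conjTranspose_conjTranspose, Matrix.mul_assoc]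
    at hconj ⊢
  rw [hconj, ← htr]
  rfl

lemma Sh_uniform (n : ℕ) [NeZero n] : Sh (fun _ : Fin n => (1 / (n : ℝ))) = Real.log n := by
  have hn : (n : ℝ) ≠ 0 := Nat.cast_ne_zero.mpr (NeZero.ne n)
  simp [Sh, hn]

/-- for every density matrix `ρ` on `ℂ^n` there is a unitary `U`
such that all diagonal entries of `U ρ U*` equal `1/n`; consequently the
Shannon entropy of that diagonal is `ln n`. -/
theorem exists_unitary_uniform_diag (n : ℕ)
    (ρ : Matrix (Fin n) (Fin n) ℂ) (hρ : IsDensityMatrix ρ) :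
    ∃ U : Matrix.unitaryGroup (Fin n) ℂ,
      (∀ i, ((U : Matrix (Fin n) (Fin n) ℂ) * ρ *
          (U : Matrix (Fin n) (Fin n) ℂ)ᴴ) i i = (1 / (n : ℂ))) ∧
      Sh (fun i =>
          (((U : Matrix (Fin n) (Fin n) ℂ) * ρ *
            (U : Matrix (Fin n) (Fin n) ℂ)ᴴ) i i).re)
        = Real.log n := by
  have hn : NeZero n := by
    refine ⟨?_⟩
    rintro rfl
    -- An empty matrix has trace `0`.
    simpa [Matrix.trace] using hρ.2
  obtain ⟨U, hU⟩ := exists_unitary_diag_eq n ρ hρ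
  refine ⟨U, hU, ?_⟩
  have hre : (1 / (n : ℂ)).re = 1 / (n : ℝ) := by
    rw [← Complex.ofReal_natCast, ← Complex.ofReal_one, ← Complex.ofReal_div, Complex.ofReal_re]
  simp only [hU, hre]
  exact Sh_uniform n
end

section
/- For two-dimensional systems the contextual entropy is (at most) two-to-one: let ρ and σ be density matrices on ℂ². If for every orthogonal projection Q ∈ M_2(ℂ) with Q ≠ 0 and Q ≠ I one has Sh(Tr(ρQ), Tr(ρ(I−Q))) = Sh(Tr(σQ), Tr(σ(I−Q))), then σ = ρ or σ = I − ρ. -/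
/-!
In Bloch coordinates `ρ = (1 + r·σ⃗)/2` and `σ = (1 + s·σ⃗)/2`, and the nontrivial projections are
`Q = (1 + n·σ⃗)/2` for unit vectors `n`, with `Tr(ρQ) = (1 + r·n)/2`. The binary entropy is injective
on `[0, 1]` up to `p ↦ 1 - p` (`eq_or_eq_one_sub_of_Sh_eq`), so the hypothesis says exactly that
`(r·n)² = (s·n)²` for all unit `n` (`bloch_sq_eq`). Taking `n` to be the coordinate vectors gives
`rᵢ² = sᵢ²`, and taking `n = (3/5) eᵢ + (4/5) eⱼ` then gives `rᵢ rⱼ = sᵢ sⱼ`; hence `s = r` or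
`s = -r`, that is `σ = ρ` or `σ = 1 - ρ`.
-/

open Matrix ComplexOrder

/-- The Hermitian matrix `(1 + x σ_x + y σ_y + z σ_z) / 2` of trace one with Bloch vector
`(x, y, z)`. -/
noncomputable def blochMat (x y z : ℝ) : Matrix (Fin 2) (Fin 2) ℂ :=
  !![⟨(1 + z) / 2, 0⟩, ⟨x / 2, -y / 2⟩; ⟨x / 2, y / 2⟩, ⟨(1 - z) / 2, 0⟩]

lemma exists_blochMat {ρ : Matrix (Fin 2) (Fin 2) ℂ} (hρ : IsDensityMatrix ρ) :
    ∃ a b c : ℝ, ρ = blochMat a b c := by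
  have hH := hρ.1.isHermitian
  have h00 := congrArg Complex.im (hH.apply 0 0)
  have h11 := congrArg Complex.im (hH.apply 1 1)
  have h10r := congrArg Complex.re (hH.apply 0 1)
  have h10i := congrArg Complex.im (hH.apply 0 1)
  have ht := congrArg Complex.re hρ.2
  simp [Matrix.trace_fin_two] at h00 h11 h10r h10i ht
  refine ⟨2 * (ρ 0 1).re, -2 * (ρ 0 1).im, 2 * (ρ 0 0).re - 1, ?_⟩
  ext i j
  fin_cases i <;> fin_cases j <;> apply Complex.ext <;> simp [blochMat] <;> linarith

lemma blochMat_conjTranspose (x y z : ℝ) : (blochMat x y z)ᴴ = blochMat x y z := by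
  ext i j
  fin_cases i <;> fin_cases j <;> apply Complex.ext <;> simp [blochMat] <;> ring

lemma one_sub_blochMat (x y z : ℝ) : 1 - blochMat x y z = blochMat (-x) (-y) (-z) := by
  ext i j
  fin_cases i <;> fin_cases j <;> apply Complex.ext <;> simp [blochMat] <;> ring

lemma blochMat_mul_self {x y z : ℝ} (h : x ^ 2 + y ^ 2 + z ^ 2 = 1) :
    blochMat x y z * blochMat x y z = blochMat x y z := by
  ext i j
  fin_cases i <;> fin_cases j <;> apply Complex.ext <;>
    simp [blochMat, Matrix.mul_apply, Fin.sum_univ_two] <;> linarith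

lemma trace_blochMat (x y z : ℝ) : (blochMat x y z).trace = 1 := by
  apply Complex.ext <;> simp [blochMat, Matrix.trace_fin_two]
  ring

lemma trace_blochMat_mul (a b c x y z : ℝ) :
    ((blochMat a b c * blochMat x y z).trace).re = (1 + (a * x + b * y + c * z)) / 2 := by
  simp [blochMat, Matrix.trace_fin_two]
  ring

/-- The Bloch vector of a density matrix has component at least `-1` along every unit vector,
because `Tr(ρQ) = Tr(QᴴρQ) ≥ 0` for the corresponding projection `Q`. -/
lemma bloch_inner_ge {a b c x y z : ℝ} (hρ : IsDensityMatrix (blochMat a b c))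
    (h : x ^ 2 + y ^ 2 + z ^ 2 = 1) : -1 ≤ a * x + b * y + c * z := by
  have h1 := (hρ.1.conjTranspose_mul_mul_same (blochMat x y z)).trace_nonneg
  rw [Matrix.trace_mul_comm, blochMat_conjTranspose, ← Matrix.mul_assoc, blochMat_mul_self h,
    Matrix.trace_mul_comm] at h1
  have h2 := (Complex.le_def.1 h1).1
  rw [trace_blochMat_mul, Complex.zero_re] at h2
  linarith

lemma Sh_eq_binEntropy (p : ℝ) : Sh ![p, 1 - p] = Real.binEntropy p := by
  rw [Real.binEntropy_eq_negMulLog_add_negMulLog_one_sub]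
  simp [Sh, Real.negMulLog]
  ring

/-- Binary entropy is injective up to `p ↦ 1 - p`: after reflecting both arguments into `[0, 1/2]`
it is strictly monotone. -/
lemma eq_or_eq_one_sub_of_Sh_eq {p q : ℝ} (hp0 : 0 ≤ p) (hp1 : p ≤ 1) (hq0 : 0 ≤ q) (hq1 : q ≤ 1)
    (h : Sh ![p, 1 - p] = Sh ![q, 1 - q]) : q = p ∨ q = 1 - p := by
  rw [Sh_eq_binEntropy, Sh_eq_binEntropy] at h
  have inj := Real.binEntropy_strictMonoOn.injOn
  have key : ∀ t : ℝ, 0 ≤ t → t ≤ 1 → ∃ u ∈ Set.Icc (0 : ℝ) 2⁻¹,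
      Real.binEntropy u = Real.binEntropy t ∧ (u = t ∨ u = 1 - t) := by
    intro t h0 h1
    rcases le_total t 2⁻¹ with ht | ht
    · exact ⟨t, ⟨h0, ht⟩, rfl, Or.inl rfl⟩
    · exact ⟨1 - t, ⟨by linarith, by norm_num at ht ⊢; linarith⟩, by simp, Or.inr rfl⟩
  obtain ⟨u, hu, hue, hu'⟩ := key p hp0 hp1
  obtain ⟨v, hv, hve, hv'⟩ := key q hq0 hq1
  have huv : u = v := inj hu hv (by rw [hue, hve, h])
  grind

lemma bloch_sq_eq {a b c a' b' c' : ℝ} (hρ : IsDensityMatrix (blochMat a b c))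
    (hσ : IsDensityMatrix (blochMat a' b' c'))
    (h : ∀ Q : Matrix (Fin 2) (Fin 2) ℂ, Qᴴ = Q → Q * Q = Q → Q ≠ 0 → Q ≠ 1 →
      Sh ![((blochMat a b c * Q).trace).re, ((blochMat a b c * (1 - Q)).trace).re]
        = Sh ![((blochMat a' b' c' * Q).trace).re, ((blochMat a' b' c' * (1 - Q)).trace).re])
    (x y z : ℝ) (hn : x ^ 2 + y ^ 2 + z ^ 2 = 1) :
    (a * x + b * y + c * z) ^ 2 = (a' * x + b' * y + c' * z) ^ 2 := by
  have hn' : (-x) ^ 2 + (-y) ^ 2 + (-z) ^ 2 = 1 := by simpa using hn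
  have hQ := h (blochMat x y z) (blochMat_conjTranspose x y z) (blochMat_mul_self hn)
    (fun h0 => by simpa [h0] using trace_blochMat x y z)
    (fun h0 => by simpa [h0] using trace_blochMat x y z)
  rw [one_sub_blochMat, trace_blochMat_mul, trace_blochMat_mul, trace_blochMat_mul,
    trace_blochMat_mul] at hQ
  have e : ∀ a b c : ℝ, (1 + (a * -x + b * -y + c * -z)) / 2
      = 1 - (1 + (a * x + b * y + c * z)) / 2 := by intros; ring
  rw [e, e] at hQ
  have r1 := bloch_inner_ge hρ hn
  have r2 := bloch_inner_ge hρ hn'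
  have s1 := bloch_inner_ge hσ hn
  have s2 := bloch_inner_ge hσ hn'
  rw [sq_eq_sq_iff_eq_or_eq_neg]
  rcases eq_or_eq_one_sub_of_Sh_eq (by linarith) (by linarith) (by linarith) (by linarith) hQ
    with h | h
  · left; linarith
  · right; linarith

/-- Two real vectors in dimension three with the same products of coordinates agree up to sign. -/
lemma eq_or_eq_neg_of_mul_eq {a b c a' b' c' : ℝ} (haa : a ^ 2 = a' ^ 2) (hbb : b ^ 2 = b' ^ 2)
    (hcc : c ^ 2 = c' ^ 2) (hab : a * b = a' * b') (hac : a * c = a' * c')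
    (hbc : b * c = b' * c') :
    (a' = a ∧ b' = b ∧ c' = c) ∨ (a' = -a ∧ b' = -b ∧ c' = -c) := by
  rcases sq_eq_sq_iff_eq_or_eq_neg.1 haa.symm with h1 | h1 <;>
  rcases sq_eq_sq_iff_eq_or_eq_neg.1 hbb.symm with h2 | h2 <;>
  rcases sq_eq_sq_iff_eq_or_eq_neg.1 hcc.symm with h3 | h3 <;>
  subst h1 h2 h3 <;> grind

/-- on `ℂ²` the contextual entropy is at most two-to-one: if
two density matrices `ρ`, `σ` have the same contextual entropy at every
nontrivial projection `Q`, then `σ = ρ` or `σ = I − ρ`. -/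
theorem qubit_contextual_entropy_two_to_one
    (ρ σ : Matrix (Fin 2) (Fin 2) ℂ)
    (hρ : IsDensityMatrix ρ) (hσ : IsDensityMatrix σ)
    (h : ∀ Q : Matrix (Fin 2) (Fin 2) ℂ, Qᴴ = Q → Q * Q = Q → Q ≠ 0 → Q ≠ 1 →
      Sh ![((ρ * Q).trace).re, ((ρ * (1 - Q)).trace).re]
        = Sh ![((σ * Q).trace).re, ((σ * (1 - Q)).trace).re]) :
    σ = ρ ∨ σ = 1 - ρ := by
  obtain ⟨a, b, c, rfl⟩ := exists_blochMat hρ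
  obtain ⟨a', b', c', rfl⟩ := exists_blochMat hσ
  have key := bloch_sq_eq hρ hσ h
  have haa := key 1 0 0 (by norm_num)
  have hbb := key 0 1 0 (by norm_num)
  have hcc := key 0 0 1 (by norm_num)
  -- The rational point (3/5, 4/5) of the unit circle detects the products of two coordinates.
  have hab := key (3 / 5) (4 / 5) 0 (by norm_num)
  have hac := key (3 / 5) 0 (4 / 5) (by norm_num)
  have hbc := key 0 (3 / 5) (4 / 5) (by norm_num)
  rw [one_sub_blochMat]
  rcases eq_or_eq_neg_of_mul_eq (a := a) (b := b) (c := c) (a' := a') (b' := b') (c' := c')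
    (by linarith) (by linarith) (by linarith) (by linarith) (by linarith) (by linarith)
    with ⟨rfl, rfl, rfl⟩ | ⟨rfl, rfl, rfl⟩
  · exact Or.inl rfl
  · exact Or.inr rfl
end

section
/- Context-independence of measures on the spectral presheaf: suppose that for every commutative unital star-subalgebra V of M_n(ℂ) we are given a function μ_V from the set of orthogonal projections belonging to V to [0,1] such that (i) μ_V(I) = 1; (ii) μ_V(P + Q) = μ_V(P) + μ_V(Q) whenever P, Q ∈ V are orthogonal projections with PQ = 0; and (iii) whenever V' ⊆ V are commutative unital star-subalgebras and P is an orthogonal projection in V', one has μ_{V'}(P) ≥ μ_V(P). Then the value μ_V(P) is independent of the context: for any orthogonal projection P and any two commutative unital star-subalgebras V and W both containing P, μ_V(P) = μ_W(P). -/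
/-!
If `U ≤ V` are contexts containing `P`, antitonicity gives `μ V P ≤ μ U P` and
`μ V (1 - P) ≤ μ U (1 - P)`. By additivity and normalisation both sides of these two inequalities
sum to `1`, so both are equalities. Two arbitrary contexts `V` and `W` containing `P` are then
compared through `V ⊓ W`, which is again a context containing `P`.
-/

open Matrix

/-- An orthogonal projection: a self-adjoint idempotent matrix. -/
def IsProjection {ι : Type*} [Fintype ι] (P : Matrix ι ι ℂ) : Prop :=
  Pᴴ = P ∧ P * P = P

/-- A star-subalgebra is commutative if all its elements commute. -/
def IsCommSub {n : ℕ} (V : StarSubalgebra ℂ (Matrix (Fin n) (Fin n) ℂ)) : Prop :=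
  ∀ a ∈ V, ∀ b ∈ V, a * b = b * a

/-- context-independence of measures on the spectral presheaf:
if a family `μ_V` (indexed by commutative unital star-subalgebras `V` of
`M_n(ℂ)`, each defined on the projections of `V` with values in `[0,1]`)
satisfies normalisation, additivity on orthogonal projections, and
antitonicity under context inclusion, then `μ_V(P)` does not depend on the
context `V` containing `P`. -/
theorem measure_context_independent (n : ℕ)
    (μ : StarSubalgebra ℂ (Matrix (Fin n) (Fin n) ℂ) →
      Matrix (Fin n) (Fin n) ℂ → ℝ)
    (h01 : ∀ V, IsCommSub V → ∀ P, IsProjection P → P ∈ V →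
      μ V P ∈ Set.Icc (0 : ℝ) 1)
    (hI : ∀ V, IsCommSub V → μ V 1 = 1)
    (hadd : ∀ V, IsCommSub V → ∀ P Q, IsProjection P → IsProjection Q →
      P ∈ V → Q ∈ V → P * Q = 0 → μ V (P + Q) = μ V P + μ V Q)
    (hmono : ∀ V V', IsCommSub V → IsCommSub V' → V' ≤ V →
      ∀ P, IsProjection P → P ∈ V' → μ V P ≤ μ V' P) :
    ∀ P, IsProjection P → ∀ V W, IsCommSub V → IsCommSub W →
      P ∈ V → P ∈ W → μ V P = μ W P := by
  -- Replacing `V` by a smaller context `U` containing `P` does not change the value.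
  have key : ∀ P, IsProjection P → ∀ V U, IsCommSub V → IsCommSub U → U ≤ V →
      P ∈ U → μ V P = μ U P := by
    intro P hP V U hV hU hUV hPU
    have hQ : IsProjection (1 - P) := by
      refine ⟨by rw [conjTranspose_sub, conjTranspose_one, hP.1], ?_⟩
      rw [sub_mul, mul_sub, mul_sub, hP.2]
      simp
    have hQU : 1 - P ∈ U := sub_mem (one_mem U) hPU
    have hPQ : P * (1 - P) = 0 := by rw [mul_sub, hP.2, mul_one, sub_self]
    have hsumV := hadd V hV P (1 - P) hP hQ (hUV hPU) (hUV hQU) hPQ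
    have hsumU := hadd U hU P (1 - P) hP hQ hPU hQU hPQ
    rw [add_sub_cancel, hI V hV] at hsumV
    rw [add_sub_cancel, hI U hU] at hsumU
    have hleP := hmono V U hV hU hUV P hP hPU
    have hleQ := hmono V U hV hU hUV (1 - P) hQ hQU
    linarith
  intro P hP V W hV hW hPV hPW
  have hU : IsCommSub (V ⊓ W) := fun a ha b hb => hV a ha.1 b hb.1
  have hPU : P ∈ V ⊓ W := ⟨hPV, hPW⟩
  rw [key P hP V (V ⊓ W) hV hU inf_le_left hPU, key P hP W (V ⊓ W) hW hU inf_le_right hPU]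
end
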